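/- arXiv:1702.00547 — 2 statements merged into one kernel-verified Lean document; each statement's English description precedes it below -/
import Mathlib

section
/- Let A1 ∈ ℍ^{m1×p}, B1 ∈ ℍ^{q1×n}, C1 ∈ ℍ^{m1×n}, A2 ∈ ℍ^{m2×m1}, B2 ∈ ℍ^{q2×q1}, C2 ∈ ℍ^{m2×q1} be quaternion matrices. Define A11 = R_{(A2 A1)} A2, B11 = R_{B1} L_{B2}, and C11 = R_{(A2 A1)} (A2 R_{A1} C1 B1⁺ + C2) L_{B2}. Then there exist quaternion matrices X1 ∈ ℍ^{p×n}, X2 ∈ ℍ^{m1×q1}, X3 ∈ ℍ^{m2×q2} satisfying A1 X1 − X2 B1 = C1 and A2 X2 − X3 B2 = C2 if and only if R_{A1} C1 L_{B1} = 0, R_{A11} C11 = 0, and C11 L_{B11} = 0. -/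
open Matrix

noncomputable section

/-- `Mat a b` is the type of `a × b` matrices over the real quaternions. -/
abbrev Mat (a b : ℕ) := Matrix (Fin a) (Fin b) (Quaternion ℝ)

/-- `Ad` is a Moore–Penrose inverse of `A`: the four Penrose equations hold. -/
def IsMPInv {k l : Type*} [Fintype k] [Fintype l]
    (A : Matrix k l (Quaternion ℝ)) (Ad : Matrix l k (Quaternion ℝ)) : Prop :=
  A * Ad * A = A ∧ Ad * A * Ad = Ad ∧ (A * Ad)ᴴ = A * Ad ∧ (Ad * A)ᴴ = Ad * A

/-- The projector `L_A = I - A⁺ A`. -/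
def Lp {k l : Type*} [Fintype k] [Fintype l] [DecidableEq l]
    (A : Matrix k l (Quaternion ℝ)) (Ad : Matrix l k (Quaternion ℝ)) :
    Matrix l l (Quaternion ℝ) :=
  1 - Ad * A

/-- The projector `R_A = I - A A⁺`. -/
def Rp {k l : Type*} [Fintype k] [Fintype l] [DecidableEq k]
    (A : Matrix k l (Quaternion ℝ)) (Ad : Matrix l k (Quaternion ℝ)) :
    Matrix k k (Quaternion ℝ) :=
  1 - A * Ad

/-!
The first equation is solvable exactly when `R_{A₁} C₁ L_{B₁} = 0`, and then the second components
of its solutions are precisely `X₂ = A₁ U + V R_{B₁} - R_{A₁} C₁ B₁⁺` with `U`, `V` free.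
Substituting this into the second equation leaves
`A₂ A₁ U + A₂ V R_{B₁} - X₃ B₂ = A₂ R_{A₁} C₁ B₁⁺ + C₂`. For fixed `V` this is again a
Sylvester-type equation in `U` and `X₃`, whose consistency condition reads `A₁₁ V B₁₁ = C₁₁`;
the latter is solvable in `V` under Penrose's two conditions.
-/

section

variable {R k l m n p q r : Type*} [Ring R] [Fintype k] [Fintype l] [Fintype m] [Fintype n]
  [Fintype p] [Fintype q] [Fintype r]

/-- `G` is an inner inverse (a `{1}`-inverse) of `A`: only the first Penrose equation is required.
This is all of the Moore–Penrose inverse that consistency of linear matrix equations needs, and it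
makes sense over an arbitrary ring. The paper's projectors `R_A` and `L_A` become `1 - A * G` and
`1 - G * A`. -/
def IsInnerInverse (A : Matrix m n R) (G : Matrix n m R) : Prop :=
  A * G * A = A

namespace IsInnerInverse

variable {A : Matrix m n R} {G : Matrix n m R} {B : Matrix k l R} {H : Matrix l k R}

theorem one_sub_mul_mul_self [DecidableEq m] (hA : IsInnerInverse A G) : (1 - A * G) * A = 0 := by
  rw [Matrix.sub_mul, Matrix.one_mul, hA, sub_self]

theorem self_mul_one_sub_mul [DecidableEq n] (hA : IsInnerInverse A G) : A * (1 - G * A) = 0 := by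
  rw [Matrix.mul_sub, Matrix.mul_one, ← Matrix.mul_assoc, hA, sub_self]

theorem exists_mul_mul_eq_iff [DecidableEq m] [DecidableEq l] (hA : IsInnerInverse A G)
    (hB : IsInnerInverse B H) {C : Matrix m l R} :
    (∃ V : Matrix n k R, A * V * B = C) ↔ (1 - A * G) * C = 0 ∧ C * (1 - H * B) = 0 := by
  constructor
  · rintro ⟨V, rfl⟩
    constructor
    · rw [Matrix.mul_assoc A, ← Matrix.mul_assoc, hA.one_sub_mul_mul_self, Matrix.zero_mul]
    · rw [Matrix.mul_assoc, hB.self_mul_one_sub_mul, Matrix.mul_zero]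
  · rintro ⟨hleft, hright⟩
    have hAGC : A * G * C = C := by
      rwa [Matrix.sub_mul, Matrix.one_mul, sub_eq_zero, eq_comm] at hleft
    have hCHB : C * (H * B) = C := by
      rwa [Matrix.mul_sub, Matrix.mul_one, sub_eq_zero, eq_comm] at hright
    refine ⟨G * C * H, ?_⟩
    calc A * (G * C * H) * B = A * G * C * (H * B) := by simp only [Matrix.mul_assoc]
      _ = C := by rw [hAGC, hCHB]

theorem exists_mul_sub_mul_eq_iff_eq_add_sub [DecidableEq m] [DecidableEq k] [DecidableEq l]
    (hA : IsInnerInverse A G) (hB : IsInnerInverse B H) {C : Matrix m l R} {Y : Matrix m k R} :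
    (∃ X : Matrix n l R, A * X - Y * B = C) ↔
      (1 - A * G) * C * (1 - H * B) = 0 ∧
        ∃ (U : Matrix n k R) (V : Matrix m k R),
          Y = A * U + V * (1 - B * H) - (1 - A * G) * C * H := by
  constructor
  · rintro ⟨X, rfl⟩
    have hres : (1 - A * G) * (A * X - Y * B) = -((1 - A * G) * Y * B) := by
      rw [Matrix.mul_sub, ← Matrix.mul_assoc, hA.one_sub_mul_mul_self, Matrix.zero_mul, zero_sub,
        Matrix.mul_assoc]
    rw [hres]
    refine ⟨?_, G * Y * B * H, Y, ?_⟩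
    · rw [Matrix.neg_mul, Matrix.mul_assoc, hB.self_mul_one_sub_mul, Matrix.mul_zero, neg_zero]
    · simp only [Matrix.mul_sub, Matrix.sub_mul, Matrix.neg_mul, Matrix.one_mul, Matrix.mul_one,
        Matrix.mul_assoc]
      abel
  · rintro ⟨hC, U, V, rfl⟩
    have hVB : V * (1 - B * H) * B = 0 := by
      rw [Matrix.mul_assoc, hB.one_sub_mul_mul_self, Matrix.mul_zero]
    have hCB : (1 - A * G) * C * H * B = (1 - A * G) * C := by
      rw [Matrix.mul_sub, Matrix.mul_one, sub_eq_zero] at hC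
      rw [Matrix.mul_assoc, ← hC]
    refine ⟨G * C + U * B, ?_⟩
    rw [Matrix.sub_mul, Matrix.add_mul, hVB, hCB, Matrix.sub_mul, Matrix.one_mul]
    simp only [Matrix.mul_add, Matrix.mul_assoc]
    abel

theorem exists_mul_sub_mul_eq_iff [DecidableEq m] [DecidableEq l]
    (hA : IsInnerInverse A G) (hB : IsInnerInverse B H) {C : Matrix m l R} :
    (∃ (X : Matrix n l R) (Y : Matrix m k R), A * X - Y * B = C) ↔
      (1 - A * G) * C * (1 - H * B) = 0 := by
  classical
  rw [exists_comm]
  simp only [hA.exists_mul_sub_mul_eq_iff_eq_add_sub hB]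
  exact ⟨fun ⟨_, hC, _⟩ ↦ hC, fun hC ↦ ⟨_, hC, 0, 0, rfl⟩⟩

theorem exists_mul_add_mul_mul_sub_mul_eq_iff [DecidableEq m] [DecidableEq l]
    (hA : IsInnerInverse A G) (hB : IsInnerInverse B H)
    {D : Matrix m p R} {E : Matrix q l R} {D' : Matrix p m R} {E' : Matrix l q R}
    (hD : IsInnerInverse ((1 - A * G) * D) D') (hE : IsInnerInverse (E * (1 - H * B)) E')
    {C : Matrix m l R} :
    (∃ (U : Matrix n l R) (V : Matrix p q R) (Z : Matrix m k R),
        A * U + D * V * E - Z * B = C) ↔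
      (1 - (1 - A * G) * D * D') * ((1 - A * G) * C * (1 - H * B)) = 0 ∧
        (1 - A * G) * C * (1 - H * B) * (1 - E' * (E * (1 - H * B))) = 0 := by
  rw [← hD.exists_mul_mul_eq_iff hE, exists_comm]
  refine exists_congr fun V ↦ ?_
  calc (∃ (U : Matrix n l R) (Z : Matrix m k R), A * U + D * V * E - Z * B = C)
      ↔ ∃ (U : Matrix n l R) (Z : Matrix m k R), A * U - Z * B = C - D * V * E := by
        simp only [eq_sub_iff_add_eq, sub_add_eq_add_sub]
    _ ↔ (1 - A * G) * (C - D * V * E) * (1 - H * B) = 0 := hA.exists_mul_sub_mul_eq_iff hB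
    _ ↔ (1 - A * G) * D * V * (E * (1 - H * B)) = (1 - A * G) * C * (1 - H * B) := by
        rw [Matrix.mul_sub _ C, Matrix.sub_mul (_ * C), sub_eq_zero, eq_comm]
        simp only [Matrix.mul_assoc]

end IsInnerInverse

theorem stmt_2_general [DecidableEq k] [DecidableEq m] [DecidableEq n] [DecidableEq q]
    {A1 : Matrix m p R} {A1g : Matrix p m R} (hA1 : IsInnerInverse A1 A1g)
    {B1 : Matrix q n R} {B1g : Matrix n q R} (hB1 : IsInnerInverse B1 B1g)
    {C1 : Matrix m n R} {A2 : Matrix k m R}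
    {B2 : Matrix r q R} {B2g : Matrix q r R} (hB2 : IsInnerInverse B2 B2g)
    {C2 : Matrix k q R}
    {A21 : Matrix k p R} (hA21 : A21 = A2 * A1)
    {A21g : Matrix p k R} (hA21g : IsInnerInverse A21 A21g)
    {A11 : Matrix k m R} (hA11 : A11 = (1 - A21 * A21g) * A2)
    {A11g : Matrix m k R} (hA11g : IsInnerInverse A11 A11g)
    {B11 : Matrix q q R} (hB11 : B11 = (1 - B1 * B1g) * (1 - B2g * B2))
    {B11g : Matrix q q R} (hB11g : IsInnerInverse B11 B11g)
    {C11 : Matrix k q R}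
    (hC11 : C11 =
      (1 - A21 * A21g) * (A2 * (1 - A1 * A1g) * C1 * B1g + C2) * (1 - B2g * B2)) :
    (∃ (X1 : Matrix p n R) (X2 : Matrix m q R) (X3 : Matrix k r R),
        A1 * X1 - X2 * B1 = C1 ∧ A2 * X2 - X3 * B2 = C2) ↔
      ((1 - A1 * A1g) * C1 * (1 - B1g * B1) = 0 ∧ (1 - A11 * A11g) * C11 = 0 ∧
        C11 * (1 - B11g * B11) = 0) := by
  subst hA11 hB11 hC11
  have hsubst (U : Matrix p q R) (V : Matrix m q R) (X3 : Matrix k r R) :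
      A2 * (A1 * U + V * (1 - B1 * B1g) - (1 - A1 * A1g) * C1 * B1g) - X3 * B2 = C2 ↔
        A21 * U + A2 * V * (1 - B1 * B1g) - X3 * B2 =
          A2 * (1 - A1 * A1g) * C1 * B1g + C2 := by
    rw [hA21, ← sub_eq_iff_eq_add', Matrix.mul_sub, Matrix.mul_add, sub_right_comm]
    simp only [Matrix.mul_assoc]
  calc _ ↔ ∃ X2 : Matrix m q R, (∃ X1 : Matrix p n R, A1 * X1 - X2 * B1 = C1) ∧
          ∃ X3 : Matrix k r R, A2 * X2 - X3 * B2 = C2 := by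
        rw [exists_comm]
        simp only [exists_and_left, exists_and_right]
    _ ↔ (1 - A1 * A1g) * C1 * (1 - B1g * B1) = 0 ∧
          ∃ (U : Matrix p q R) (V : Matrix m q R) (X3 : Matrix k r R),
          A2 * (A1 * U + V * (1 - B1 * B1g) - (1 - A1 * A1g) * C1 * B1g) - X3 * B2 = C2 := by
        simp only [hA1.exists_mul_sub_mul_eq_iff_eq_add_sub hB1]
        constructor
        · rintro ⟨_, ⟨hC1, U, V, rfl⟩, X3, hX3⟩
          exact ⟨hC1, U, V, X3, hX3⟩
        · rintro ⟨hC1, U, V, X3, hX3⟩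
          exact ⟨_, ⟨hC1, U, V, rfl⟩, X3, hX3⟩
    _ ↔ _ := by
        simp only [hsubst, hA21g.exists_mul_add_mul_mul_sub_mul_eq_iff hB2 hA11g hB11g]

end

theorem stmt_2 {m1 p q1 n m2 q2 : ℕ}
    (A1 : Mat m1 p) (A1d : Mat p m1) (hA1 : IsMPInv A1 A1d)
    (B1 : Mat q1 n) (B1d : Mat n q1) (hB1 : IsMPInv B1 B1d)
    (C1 : Mat m1 n)
    (A2 : Mat m2 m1)
    (B2 : Mat q2 q1) (B2d : Mat q1 q2) (hB2 : IsMPInv B2 B2d)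
    (C2 : Mat m2 q1)
    (A21 : Mat m2 p) (hA21 : A21 = A2 * A1)
    (A21d : Mat p m2) (hA21d : IsMPInv A21 A21d)
    (A11 : Mat m2 m1) (hA11 : A11 = Rp A21 A21d * A2)
    (A11d : Mat m1 m2) (hA11d : IsMPInv A11 A11d)
    (B11 : Mat q1 q1) (hB11 : B11 = Rp B1 B1d * Lp B2 B2d)
    (B11d : Mat q1 q1) (hB11d : IsMPInv B11 B11d)
    (C11 : Mat m2 q1)
    (hC11 : C11 = Rp A21 A21d * (A2 * Rp A1 A1d * C1 * B1d + C2) * Lp B2 B2d) :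
    (∃ (X1 : Mat p n) (X2 : Mat m1 q1) (X3 : Mat m2 q2),
        A1 * X1 - X2 * B1 = C1 ∧ A2 * X2 - X3 * B2 = C2) ↔
      (Rp A1 A1d * C1 * Lp B1 B1d = 0 ∧ Rp A11 A11d * C11 = 0 ∧
        C11 * Lp B11 B11d = 0) :=
  stmt_2_general hA1.1 hB1.1 hB2.1 hA21 hA21d.1 hA11 hA11d.1 hB11 hB11d.1 hC11
end
end

section
/- Let A1 ∈ ℍ^{m×p1}, B1 ∈ ℍ^{q1×n}, C3 ∈ ℍ^{m×r3}, D3 ∈ ℍ^{s3×n}, C4 ∈ ℍ^{m×r4}, D4 ∈ ℍ^{s4×n}, E1 ∈ ℍ^{m×n} be quaternion matrices, and define A = R_{A1} C3, B = D3 L_{B1}, C = R_{A1} C4, D = D4 L_{B1}, E = R_{A1} E1 L_{B1}, M = R_A C, N = D L_B, S = C L_M. Assume R_M R_A E = 0, E L_B L_N = 0, R_A E L_D = 0 and R_C E L_B = 0. Then quaternion matrices (X1, X2, X3, X4) of sizes p1×n, m×q1, r3×s3, r4×s4 satisfy A1 X1 + X2 B1 + C3 X3 D3 + C4 X4 D4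 = E1 if and only if there exist quaternion matrices T1, T2, T3, T4, T5, T6, T7, T8 of appropriate sizes such that X3 = A⁺ E B⁺ − A⁺ C M⁺ E B⁺ − A⁺ S C⁺ E N⁺ D B⁺ − A⁺ S T2 R_N D B⁺ + L_A T4 + T5 R_B, X4 = M⁺ E D⁺ + S⁺ S C⁺ E N⁺ + L_M L_S T1 + L_M T2 R_N + T3 R_D, X1 = A1⁺ (E1 − C3 X3 D3 − C4 X4 D4) − A1⁺ T7 B1 + L_{A1} T6, and X2 = R_{A1} (E1 − C3 X3 D3 − C4 X4 D4) B1⁺ + A1 A1⁺ T7 + T8 R_{B1}. -/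
open Matrix

noncomputable section

/-!
Penrose's description of the solutions of `A X B = F` requires only an inner inverse of each
coefficient, so it is available over every ring. It is used three times. Applied to
`A X B = E - C Y D`, it eliminates `X` and leaves the pair `M Y D = R_A E`, `C Y N = E L_B` for `Y`.
Applied to the first equation of the pair, it gives `Y = M⁻ R_A E D⁻ + L_M U + V R_D`. Substituting
this in the second equation, and using `R_C E L_B = 0`, leaves `S U N = S C⁻ E L_B`, where it
applies once more. The unknowns `X₁` and `X₂` are eliminated in the same way beforehand, through the
equation `A₁ X₁ + X₂ B₁ = F`, which is solvable exactly when `R_{A₁} F L_{B₁} = 0`. The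
Moore–Penrose equations matter only for the absorption rules `M⁺ R_A = M⁺`, `L_B N⁺ = N⁺` and
`L_M S⁺ = S⁺`, which shorten the resulting formulas; any inner inverses can be made to obey them,
for instance by replacing `M⁻` with `M⁻ R_A`.
-/

section Definitions

variable {R k l : Type*} [Fintype k] [Fintype l]

/-- `A'` is an inner inverse (or `{1}`-inverse) of `A`: the first Penrose equation holds. -/
def IsInnerInv [NonUnitalNonAssocSemiring R] (A : Matrix k l R) (A' : Matrix l k R) : Prop :=
  A * A' * A = A

/-- The projector `L_A = 1 - A⁻ A` of a generalized inverse `A' = A⁻`, over an arbitrary ring. The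
letter is the paper's; it is a *right* annihilator of `A`. -/
def projL [NonAssocRing R] [DecidableEq l] (A : Matrix k l R) (A' : Matrix l k R) : Matrix l l R :=
  1 - A' * A

/-- The projector `R_A = 1 - A A⁻` of a generalized inverse `A' = A⁻`, over an arbitrary ring. The
letter is the paper's; it is a *left* annihilator of `A`. -/
def projR [NonAssocRing R] [DecidableEq k] (A : Matrix k l R) (A' : Matrix l k R) : Matrix k k R :=
  1 - A * A'

end Definitions

section Projectors

variable {R j k l : Type*} [Ring R] [Fintype k] [Fintype l]
  {A : Matrix k l R} {A' : Matrix l k R}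

theorem mul_projL_eq_zero_iff [DecidableEq l] {F : Matrix j l R} :
    F * projL A A' = 0 ↔ F * A' * A = F := by
  rw [projL, Matrix.mul_sub, Matrix.mul_one, sub_eq_zero, Matrix.mul_assoc, eq_comm]

theorem projR_mul_eq_zero_iff [DecidableEq k] {F : Matrix k j R} :
    projR A A' * F = 0 ↔ A * A' * F = F := by
  rw [projR, Matrix.sub_mul, Matrix.one_mul, sub_eq_zero, eq_comm]

theorem IsInnerInv.mul_projL [DecidableEq l] (hA : IsInnerInv A A') : A * projL A A' = 0 :=
  mul_projL_eq_zero_iff.2 hA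

theorem IsInnerInv.projR_mul [DecidableEq k] (hA : IsInnerInv A A') : projR A A' * A = 0 :=
  projR_mul_eq_zero_iff.2 hA

theorem IsInnerInv.projL_mul_projL [DecidableEq l] (hA : IsInnerInv A A') :
    projL A A' * projL A A' = projL A A' := by
  conv_lhs => rw [projL, Matrix.sub_mul, Matrix.one_mul, Matrix.mul_assoc]
  rw [← projL, hA.mul_projL, Matrix.mul_zero, sub_zero]

theorem IsInnerInv.projR_mul_projR [DecidableEq k] (hA : IsInnerInv A A') :
    projR A A' * projR A A' = projR A A' := by
  conv_lhs => rw [projR, Matrix.mul_sub, Matrix.mul_one, ← Matrix.mul_assoc]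
  rw [← projR, hA.projR_mul, Matrix.zero_mul, sub_zero]

end Projectors

section LinearEquations

variable {R k l m n : Type*} [Ring R] [Fintype k] [Fintype l] [Fintype m] [Fintype n]
  [DecidableEq k] [DecidableEq l] [DecidableEq m] [DecidableEq n]

theorem IsInnerInv.mul_mul_eq_iff {A : Matrix k l R} {A' : Matrix l k R} {B : Matrix m n R}
    {B' : Matrix n m R} (hA : IsInnerInv A A') (hB : IsInnerInv B B') {F : Matrix k n R}
    {X : Matrix l m R} :
    A * X * B = F ↔ projR A A' * F = 0 ∧ F * projL B B' = 0 ∧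
      ∃ U V : Matrix l m R, X = A' * F * B' + projL A A' * U + V * projR B B' := by
  constructor
  · rintro rfl
    refine ⟨?_, ?_, X, A' * A * X, ?_⟩
    · rw [Matrix.mul_assoc A, ← Matrix.mul_assoc, hA.projR_mul, Matrix.zero_mul]
    · rw [Matrix.mul_assoc, hB.mul_projL, Matrix.mul_zero]
    · simp only [projL, projR, Matrix.sub_mul, Matrix.mul_sub, Matrix.one_mul, Matrix.mul_one,
        Matrix.mul_assoc]
      abel
  · rintro ⟨hRF, hFL, U, V, rfl⟩
    calc A * (A' * F * B' + projL A A' * U + V * projR B B') * B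
        = A * A' * F * B' * B + A * projL A A' * U * B + A * V * (projR B B' * B) := by
          simp only [Matrix.mul_add, Matrix.add_mul, Matrix.mul_assoc]
      _ = F := by
          rw [projR_mul_eq_zero_iff.1 hRF, mul_projL_eq_zero_iff.1 hFL, hA.mul_projL,
            hB.projR_mul]
          simp only [Matrix.zero_mul, Matrix.mul_zero, add_zero]

theorem IsInnerInv.mul_add_mul_eq_iff {A : Matrix k l R} {A' : Matrix l k R} {B : Matrix m n R}
    {B' : Matrix n m R} (hA : IsInnerInv A A') (hB : IsInnerInv B B') {F : Matrix k n R}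
    {X : Matrix l n R} {Y : Matrix k m R} :
    A * X + Y * B = F ↔ projR A A' * F * projL B B' = 0 ∧
      ∃ (T : Matrix l n R) (U V : Matrix k m R),
        X = A' * F - A' * U * B + projL A A' * T ∧
        Y = projR A A' * F * B' + A * A' * U + V * projR B B' := by
  constructor
  · rintro rfl
    have hR : projR A A' * (A * X + Y * B) = projR A A' * Y * B := by
      rw [Matrix.mul_add, ← Matrix.mul_assoc, hA.projR_mul, Matrix.zero_mul, zero_add,
        Matrix.mul_assoc]
    refine ⟨?_, X, Y, projR A A' * Y, ?_, ?_⟩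
    · rw [hR, Matrix.mul_assoc, hB.mul_projL, Matrix.mul_zero]
    · simp only [projL, Matrix.mul_add, Matrix.sub_mul, Matrix.one_mul, Matrix.mul_assoc]
      abel
    · rw [hR]
      simp only [projR, Matrix.mul_sub, Matrix.sub_mul, Matrix.one_mul, Matrix.mul_one,
        Matrix.mul_assoc]
      abel
  · rintro ⟨hF, T, U, V, rfl, rfl⟩
    calc A * (A' * F - A' * U * B + projL A A' * T)
          + (projR A A' * F * B' + A * A' * U + V * projR B B') * B
        = A * A' * F + projR A A' * F * B' * B + A * projL A A' * T
          + V * (projR B B' * B) := by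
          simp only [Matrix.mul_add, Matrix.add_mul, Matrix.mul_sub, Matrix.mul_assoc]
          abel
      _ = A * A' * F + projR A A' * F := by
          rw [mul_projL_eq_zero_iff.1 hF, hA.mul_projL, hB.projR_mul]
          simp only [Matrix.zero_mul, Matrix.mul_zero, add_zero]
      _ = F := by
          simp only [projR, Matrix.sub_mul, Matrix.one_mul]
          abel

end LinearEquations

section SimultaneousEquations

variable {R m n p q r s : Type*} [Ring R] [Fintype r]
  {C S : Matrix m r R} {C' S' : Matrix r m R} {D : Matrix s n R} {D' : Matrix n s R}
  {M : Matrix p r R} {M' : Matrix r p R} {P : Matrix p m R}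

theorem mul_projL_mul_eq_sub [Fintype m] [Fintype p] [DecidableEq m] [DecidableEq r]
    (hMC : M = P * C) {F : Matrix m q R} (hF : projR C C' * F = 0) :
    C * projL M M' * C' * F = F - C * M' * P * F := by
  have hCF : C * (C' * F) = F := by
    rw [← Matrix.mul_assoc, projR_mul_eq_zero_iff.1 hF]
  simp only [projL, hMC, Matrix.mul_sub, Matrix.sub_mul, Matrix.mul_one, Matrix.mul_assoc, hCF]

variable [Fintype n] [Fintype p] [Fintype s] [DecidableEq n] [DecidableEq r] [DecidableEq s]

theorem IsInnerInv.mul_add_add_mul (hD : IsInnerInv D D') (hSC : S = C * projL M M')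
    {K : Matrix r n R} (hK : K * projL D D' = 0) (U V : Matrix r s R) :
    C * (K * D' + projL M M' * U + V * projR D D') * D = C * K + S * U * D := by
  calc C * (K * D' + projL M M' * U + V * projR D D') * D
      = C * (K * D' * D) + C * projL M M' * U * D + C * V * (projR D D' * D) := by
        simp only [Matrix.mul_add, Matrix.add_mul, Matrix.mul_assoc]
    _ = C * K + S * U * D := by
        rw [mul_projL_eq_zero_iff.1 hK, hD.projR_mul, Matrix.mul_zero, add_zero, hSC]

variable [Fintype m] [DecidableEq m] {N : Matrix s q R} {Q : Matrix n q R} {E : Matrix m n R}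

theorem IsInnerInv.mul_add_add_mul_eq_iff (hD : IsInnerInv D D') (hMC : M = P * C)
    (hND : N = D * Q) (hSC : S = C * projL M M') (hLD : P * E * projL D D' = 0)
    (hRC : projR C C' * (E * Q) = 0) (U V : Matrix r s R) :
    C * (M' * (P * E) * D' + projL M M' * U + V * projR D D') * N = E * Q ↔
      S * U * N = S * C' * (E * Q) := by
  have hMLD : M' * (P * E) * projL D D' = 0 := by
    rw [Matrix.mul_assoc, hLD, Matrix.mul_zero]
  have hCYN : C * (M' * (P * E) * D' + projL M M' * U + V * projR D D') * N
      = C * M' * P * (E * Q) + S * U * N := by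
    rw [hND, ← Matrix.mul_assoc, hD.mul_add_add_mul hSC hMLD]
    simp only [Matrix.add_mul, Matrix.mul_assoc]
  have hSCEQ : S * C' * (E * Q) = E * Q - C * M' * P * (E * Q) := by
    rw [hSC, mul_projL_mul_eq_sub hMC hRC]
  rw [hCYN, hSCEQ, eq_sub_iff_add_eq']

theorem mul_mul_eq_and_mul_mul_eq_iff [Fintype q] [DecidableEq p] [DecidableEq q]
    {N' : Matrix q s R}
    (hC : IsInnerInv C C') (hD : IsInnerInv D D') (hM : IsInnerInv M M') (hN : IsInnerInv N N')
    (hS : IsInnerInv S S') (hMC : M = P * C) (hND : N = D * Q) (hSC : S = C * projL M M')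
    {Y : Matrix r s R} :
    M * Y * D = P * E ∧ C * Y * N = E * Q ↔
      (projR M M' * (P * E) = 0 ∧ E * Q * projL N N' = 0 ∧ P * E * projL D D' = 0 ∧
        projR C C' * (E * Q) = 0) ∧
      ∃ T₁ T₂ T₃ : Matrix r s R,
        Y = M' * (P * E) * D' + projL M M' *
              (S' * (S * C' * (E * Q)) * N' + projL S S' * T₁ + T₂ * projR N N')
            + T₃ * projR D D' := by
  constructor
  · rintro ⟨hPE, hEQ⟩
    obtain ⟨hRM, hLD, U, V, rfl⟩ := (hM.mul_mul_eq_iff hD).1 hPE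
    obtain ⟨hRC, hLN, -⟩ := (hC.mul_mul_eq_iff hN).1 hEQ
    have hSUN := (hD.mul_add_add_mul_eq_iff hMC hND hSC hLD hRC U V).1 hEQ
    obtain ⟨-, -, T₁, T₂, rfl⟩ := (hS.mul_mul_eq_iff hN).1 hSUN
    exact ⟨⟨hRM, hLN, hLD, hRC⟩, T₁, T₂, V, rfl⟩
  · rintro ⟨⟨hRM, hLN, hLD, hRC⟩, T₁, T₂, T₃, rfl⟩
    have hRS : projR S S' * (S * C' * (E * Q)) = 0 := by
      simp only [← Matrix.mul_assoc, hS.projR_mul, Matrix.zero_mul]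
    have hLN' : S * C' * (E * Q) * projL N N' = 0 := by
      rw [Matrix.mul_assoc, hLN, Matrix.mul_zero]
    exact ⟨(hM.mul_mul_eq_iff hD).2 ⟨hRM, hLD, _, T₃, rfl⟩,
      (hD.mul_add_add_mul_eq_iff hMC hND hSC hLD hRC _ T₃).2 <|
        (hS.mul_mul_eq_iff hN).2 ⟨hRS, hLN', T₁, T₂, rfl⟩⟩

end SimultaneousEquations

section Absorption

variable {R m n r s : Type*} [Ring R] [Fintype m] [Fintype n] [Fintype r] [Fintype s]
  [DecidableEq n] [DecidableEq r] [DecidableEq s]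
  {C M S : Matrix m r R} {C' M' S' : Matrix r m R} {D N : Matrix s n R} {D' N' : Matrix n s R}
  {E : Matrix m n R}

theorem IsInnerInv.mul_generalSolution_mul (hD : IsInnerInv D D') (hS : IsInnerInv S S')
    (hSC : S = C * projL M M') (hMS : projL M M' * S' = S') (hE : M' * E * projL D D' = 0)
    (T₁ T₂ T₃ : Matrix r s R) :
    C * (M' * E * D' + S' * S * C' * E * N' + projL M M' * projL S S' * T₁
          + projL M M' * T₂ * projR N N' + T₃ * projR D D') * D
      = C * M' * E + S * C' * E * N' * D + S * T₂ * projR N N' * D := by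
  let U : Matrix r s R := S' * (S * C' * E * N') + projL S S' * T₁ + T₂ * projR N N'
  have hU : S * U = S * C' * E * N' + S * T₂ * projR N N' := by
    simp only [U, Matrix.mul_add, ← Matrix.mul_assoc, hS.mul_projL, Matrix.zero_mul, add_zero,
      show S * S' * S = S from hS]
  have hMU : S' * S * C' * E * N' + projL M M' * projL S S' * T₁ + projL M M' * T₂ * projR N N'
      = projL M M' * U := by
    simp only [U, Matrix.mul_add, ← Matrix.mul_assoc, hMS]
  rw [add_assoc (M' * E * D'), add_assoc (M' * E * D'), hMU, hD.mul_add_add_mul hSC hE, hU,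
    Matrix.add_mul, ← Matrix.mul_assoc, add_assoc]

theorem mul_mul_eq_and_mul_mul_eq_iff_of_absorb [DecidableEq m] {P : Matrix m m R}
    {Q : Matrix n n R} {Y : Matrix r s R}
    (hC : IsInnerInv C C') (hD : IsInnerInv D D') (hM : IsInnerInv M M') (hN : IsInnerInv N N')
    (hS : IsInnerInv S S') (hMC : M = P * C) (hND : N = D * Q) (hSC : S = C * projL M M')
    (hMP : M' * P = M') (hQN : Q * N' = N') (hMS : projL M M' * S' = S') :
    M * Y * D = P * E ∧ C * Y * N = E * Q ↔
      (projR M M' * P * E = 0 ∧ E * Q * projL N N' = 0 ∧ P * E * projL D D' = 0 ∧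
        projR C C' * E * Q = 0) ∧
      ∃ T₁ T₂ T₃ : Matrix r s R,
        Y = M' * E * D' + S' * S * C' * E * N' + projL M M' * projL S S' * T₁
              + projL M M' * T₂ * projR N N' + T₃ * projR D D' := by
  have hME : M' * (P * E) = M' * E := by rw [← Matrix.mul_assoc, hMP]
  rw [mul_mul_eq_and_mul_mul_eq_iff hC hD hM hN hS hMC hND hSC, hME]
  simp only [Matrix.mul_add, Matrix.mul_assoc, hQN, add_assoc]
  simp only [← Matrix.mul_assoc, hMS]

end Absorption

section TwoTermEquation

variable {R m n r s u v : Type*} [Ring R] [Fintype m] [Fintype n] [Fintype r] [Fintype s]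
  [Fintype u] [Fintype v] [DecidableEq m] [DecidableEq n] [DecidableEq u] [DecidableEq v]
  {A : Matrix m u R} {A' : Matrix u m R} {B : Matrix v n R} {B' : Matrix n v R}
  {C M S : Matrix m r R} {C' M' S' : Matrix r m R} {D N : Matrix s n R} {D' N' : Matrix n s R}
  {E : Matrix m n R} {X : Matrix u v R} {Y : Matrix r s R}

theorem IsInnerInv.mul_mul_add_mul_mul_eq_iff_elim_left (hA : IsInnerInv A A')
    (hB : IsInnerInv B B') (hMC : M = projR A A' * C) (hND : N = D * projL B B') :
    A * X * B + C * Y * D = E ↔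
      (M * Y * D = projR A A' * E ∧ C * Y * N = E * projL B B') ∧
        ∃ T₄ T₅ : Matrix u v R,
          X = A' * (E - C * Y * D) * B' + projL A A' * T₄ + T₅ * projR B B' := by
  have hleft : projR A A' * (E - C * Y * D) = 0 ↔ M * Y * D = projR A A' * E := by
    rw [Matrix.mul_sub, sub_eq_zero, eq_comm, hMC]
    simp only [Matrix.mul_assoc]
  have hright : (E - C * Y * D) * projL B B' = 0 ↔ C * Y * N = E * projL B B' := by
    rw [Matrix.sub_mul, sub_eq_zero, eq_comm, hND, Matrix.mul_assoc _ D]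
  rw [← eq_sub_iff_add_eq, hA.mul_mul_eq_iff hB, hleft, hright, and_assoc]

theorem mul_mul_add_mul_mul_eq_iff [DecidableEq r] [DecidableEq s]
    (hA : IsInnerInv A A') (hB : IsInnerInv B B') (hC : IsInnerInv C C') (hD : IsInnerInv D D')
    (hM : IsInnerInv M M') (hN : IsInnerInv N N') (hS : IsInnerInv S S')
    (hMC : M = projR A A' * C) (hND : N = D * projL B B') (hSC : S = C * projL M M')
    (hMA : M' * projR A A' = M') (hBN : projL B B' * N' = N') (hMS : projL M M' * S' = S') :
    A * X * B + C * Y * D = E ↔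
      (projR M M' * projR A A' * E = 0 ∧ E * projL B B' * projL N N' = 0 ∧
        projR A A' * E * projL D D' = 0 ∧ projR C C' * E * projL B B' = 0) ∧
      ∃ (T₁ T₂ T₃ : Matrix r s R) (T₄ T₅ : Matrix u v R),
        X = A' * E * B' - A' * C * M' * E * B' - A' * S * C' * E * N' * D * B'
              - A' * S * T₂ * projR N N' * D * B' + projL A A' * T₄ + T₅ * projR B B' ∧
        Y = M' * E * D' + S' * S * C' * E * N' + projL M M' * projL S S' * T₁
              + projL M M' * T₂ * projR N N' + T₃ * projR D D' := by
  have hresidual (hLD : projR A A' * E * projL D D' = 0) (T₁ T₂ T₃ : Matrix r s R) :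
      A' * (E - C * (M' * E * D' + S' * S * C' * E * N' + projL M M' * projL S S' * T₁
          + projL M M' * T₂ * projR N N' + T₃ * projR D D') * D) * B'
        = A' * E * B' - A' * C * M' * E * B' - A' * S * C' * E * N' * D * B'
          - A' * S * T₂ * projR N N' * D * B' := by
    have hMLD : M' * E * projL D D' = 0 := by
      rw [← hMA, Matrix.mul_assoc M', Matrix.mul_assoc M', hLD, Matrix.mul_zero]
    rw [hD.mul_generalSolution_mul hS hSC hMS hMLD]
    simp only [Matrix.mul_sub, Matrix.sub_mul, Matrix.mul_add, Matrix.add_mul, Matrix.mul_assoc,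
      sub_sub, add_assoc]
  rw [hA.mul_mul_add_mul_mul_eq_iff_elim_left hB hMC hND,
    mul_mul_eq_and_mul_mul_eq_iff_of_absorb hC hD hM hN hS hMC hND hSC hMA hBN hMS]
  constructor
  · rintro ⟨⟨hcond, T₁, T₂, T₃, rfl⟩, T₄, T₅, rfl⟩
    exact ⟨hcond, T₁, T₂, T₃, T₄, T₅, by rw [hresidual hcond.2.2.1], rfl⟩
  · rintro ⟨hcond, T₁, T₂, T₃, T₄, T₅, rfl, rfl⟩
    exact ⟨⟨hcond, T₁, T₂, T₃, rfl⟩, T₄, T₅, by rw [hresidual hcond.2.2.1]⟩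

end TwoTermEquation

section MoorePenrose

theorem mul_eq_left_of_isHermitian {R k l : Type*} [NonUnitalSemiring R] [StarRing R] [Fintype k]
    [Fintype l] {M : Matrix k l R} {M' : Matrix l k R} {P : Matrix k k R} (hM : M' * M * M' = M')
    (hMM : (M * M').IsHermitian) (hP : P.IsHermitian) (hPM : P * M = M) : M' * P = M' := by
  calc M' * P = M' * (M * M') * P := by rw [← Matrix.mul_assoc, hM]
    _ = M' * (P * (M * M'))ᴴ := by rw [conjTranspose_mul, hP.eq, hMM.eq, Matrix.mul_assoc]
    _ = M' := by rw [← Matrix.mul_assoc, hPM, hMM.eq, ← Matrix.mul_assoc, hM]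

theorem mul_eq_right_of_isHermitian {R k l : Type*} [NonUnitalSemiring R] [StarRing R] [Fintype k]
    [Fintype l] {M : Matrix k l R} {M' : Matrix l k R} {P : Matrix l l R} (hM : M' * M * M' = M')
    (hMM : (M' * M).IsHermitian) (hP : P.IsHermitian) (hMP : M * P = M) : P * M' = M' := by
  calc P * M' = P * (M' * M) * M' := by rw [Matrix.mul_assoc, hM]
    _ = (M' * M * P)ᴴ * M' := by rw [conjTranspose_mul, hP.eq, hMM.eq]
    _ = M' := by rw [Matrix.mul_assoc, hMP, hMM.eq, hM]

variable {R k l m : Type*} [Ring R] [StarRing R] [Fintype k] [Fintype l] [Fintype m]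
  {A : Matrix k l R} {A' : Matrix l k R}

theorem IsInnerInv.mul_projR_eq_self [DecidableEq k] {C M : Matrix k m R} {M' : Matrix m k R}
    (hA : IsInnerInv A A') (hAA : (A * A').IsHermitian) (hM : M' * M * M' = M')
    (hMM : (M * M').IsHermitian) (hMC : M = projR A A' * C) : M' * projR A A' = M' :=
  mul_eq_left_of_isHermitian hM hMM (isHermitian_one.sub hAA)
    (by rw [hMC, ← Matrix.mul_assoc, hA.projR_mul_projR])

theorem IsInnerInv.projL_mul_eq_self [DecidableEq l] {C M : Matrix m l R} {M' : Matrix l m R}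
    (hA : IsInnerInv A A') (hAA : (A' * A).IsHermitian) (hM : M' * M * M' = M')
    (hMM : (M' * M).IsHermitian) (hMC : M = C * projL A A') : projL A A' * M' = M' :=
  mul_eq_right_of_isHermitian hM hMM (isHermitian_one.sub hAA)
    (by rw [hMC, Matrix.mul_assoc, hA.projL_mul_projL])

end MoorePenrose

theorem stmt_7_general {R m n p1 q1 r3 s3 r4 s4 : Type*} [Ring R] [Fintype m] [Fintype n]
    [Fintype p1] [Fintype q1] [Fintype r3] [Fintype s3] [Fintype r4] [Fintype s4]
    [DecidableEq m] [DecidableEq n] [DecidableEq p1] [DecidableEq q1] [DecidableEq r3]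
    [DecidableEq s3] [DecidableEq r4] [DecidableEq s4]
    {A1 : Matrix m p1 R} {A1' : Matrix p1 m R} (hA1 : IsInnerInv A1 A1')
    {B1 : Matrix q1 n R} {B1' : Matrix n q1 R} (hB1 : IsInnerInv B1 B1')
    {C3 : Matrix m r3 R} {D3 : Matrix s3 n R} {C4 : Matrix m r4 R} {D4 : Matrix s4 n R}
    {E1 : Matrix m n R}
    {A : Matrix m r3 R} (hA : A = projR A1 A1' * C3) {A' : Matrix r3 m R} (hA' : IsInnerInv A A')
    {B : Matrix s3 n R} (hB : B = D3 * projL B1 B1') {B' : Matrix n s3 R} (hB' : IsInnerInv B B')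
    {C : Matrix m r4 R} (hC : C = projR A1 A1' * C4) {C' : Matrix r4 m R} (hC' : IsInnerInv C C')
    {D : Matrix s4 n R} (hD : D = D4 * projL B1 B1') {D' : Matrix n s4 R} (hD' : IsInnerInv D D')
    {E : Matrix m n R} (hE : E = projR A1 A1' * E1 * projL B1 B1')
    {M : Matrix m r4 R} (hM : M = projR A A' * C) {M' : Matrix r4 m R} (hM' : IsInnerInv M M')
    {N : Matrix s4 n R} (hN : N = D * projL B B') {N' : Matrix n s4 R} (hN' : IsInnerInv N N')
    {S : Matrix m r4 R} (hS : S = C * projL M M') {S' : Matrix r4 m R} (hS' : IsInnerInv S S')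
    (hMA : M' * projR A A' = M') (hBN : projL B B' * N' = N') (hMS : projL M M' * S' = S')
    {X1 : Matrix p1 n R} {X2 : Matrix m q1 R} {X3 : Matrix r3 s3 R} {X4 : Matrix r4 s4 R} :
    A1 * X1 + X2 * B1 + C3 * X3 * D3 + C4 * X4 * D4 = E1 ↔
      (projR M M' * projR A A' * E = 0 ∧ E * projL B B' * projL N N' = 0 ∧
        projR A A' * E * projL D D' = 0 ∧ projR C C' * E * projL B B' = 0) ∧
      ∃ (T1 T2 T3 : Matrix r4 s4 R) (T4 T5 : Matrix r3 s3 R) (T6 : Matrix p1 n R)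
          (T7 T8 : Matrix m q1 R),
        X3 = A' * E * B' - A' * C * M' * E * B' - A' * S * C' * E * N' * D * B'
              - A' * S * T2 * projR N N' * D * B' + projL A A' * T4 + T5 * projR B B' ∧
        X4 = M' * E * D' + S' * S * C' * E * N' + projL M M' * projL S S' * T1
              + projL M M' * T2 * projR N N' + T3 * projR D D' ∧
        X1 = A1' * (E1 - C3 * X3 * D3 - C4 * X4 * D4) - A1' * T7 * B1 + projL A1 A1' * T6 ∧
        X2 = projR A1 A1' * (E1 - C3 * X3 * D3 - C4 * X4 * D4) * B1' + A1 * A1' * T7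
              + T8 * projR B1 B1' := by
  have hmove : A1 * X1 + X2 * B1 + C3 * X3 * D3 + C4 * X4 * D4 = E1 ↔
      A1 * X1 + X2 * B1 = E1 - C3 * X3 * D3 - C4 * X4 * D4 := by
    rw [eq_sub_iff_add_eq, eq_sub_iff_add_eq, add_right_comm]
  have hproj : projR A1 A1' * (E1 - C3 * X3 * D3 - C4 * X4 * D4) * projL B1 B1'
      = E - (A * X3 * B + C * X4 * D) := by
    rw [hA, hB, hC, hD, hE]
    simp only [Matrix.mul_sub, Matrix.sub_mul, Matrix.mul_add, Matrix.add_mul, Matrix.mul_assoc,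
      sub_sub]
  rw [hmove, hA1.mul_add_mul_eq_iff hB1, hproj, sub_eq_zero, eq_comm (a := E),
    mul_mul_add_mul_mul_eq_iff hA' hB' hC' hD' hM' hN' hS' hM hN hS hMA hBN hMS, and_assoc]
  refine and_congr_right fun _ => ⟨?_, ?_⟩
  · rintro ⟨⟨T1, T2, T3, T4, T5, hX3, hX4⟩, T6, T7, T8, hX1, hX2⟩
    exact ⟨T1, T2, T3, T4, T5, T6, T7, T8, hX3, hX4, hX1, hX2⟩
  · rintro ⟨T1, T2, T3, T4, T5, T6, T7, T8, hX3, hX4, hX1, hX2⟩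
    exact ⟨⟨T1, T2, T3, T4, T5, hX3, hX4⟩, T6, T7, T8, hX1, hX2⟩

theorem stmt_7 {m p1 q1 n r3 s3 r4 s4 : ℕ}
    (A1 : Mat m p1) (A1d : Mat p1 m) (hA1 : IsMPInv A1 A1d)
    (B1 : Mat q1 n) (B1d : Mat n q1) (hB1 : IsMPInv B1 B1d)
    (C3 : Mat m r3) (D3 : Mat s3 n) (C4 : Mat m r4) (D4 : Mat s4 n)
    (E1 : Mat m n)
    (A : Mat m r3) (hA : A = Rp A1 A1d * C3)
    (Ad : Mat r3 m) (hAd : IsMPInv A Ad)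
    (B : Mat s3 n) (hB : B = D3 * Lp B1 B1d)
    (Bd : Mat n s3) (hBd : IsMPInv B Bd)
    (C : Mat m r4) (hC : C = Rp A1 A1d * C4)
    (Cd : Mat r4 m) (hCd : IsMPInv C Cd)
    (D : Mat s4 n) (hD : D = D4 * Lp B1 B1d)
    (Dd : Mat n s4) (hDd : IsMPInv D Dd)
    (E : Mat m n) (hE : E = Rp A1 A1d * E1 * Lp B1 B1d)
    (M : Mat m r4) (hM : M = Rp A Ad * C)
    (Md : Mat r4 m) (hMd : IsMPInv M Md)
    (N : Mat s4 n) (hN : N = D * Lp B Bd)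
    (Nd : Mat n s4) (hNd : IsMPInv N Nd)
    (S : Mat m r4) (hS : S = C * Lp M Md)
    (Sd : Mat r4 m) (hSd : IsMPInv S Sd)
    (hcond1 : Rp M Md * Rp A Ad * E = 0)
    (hcond2 : E * Lp B Bd * Lp N Nd = 0)
    (hcond3 : Rp A Ad * E * Lp D Dd = 0)
    (hcond4 : Rp C Cd * E * Lp B Bd = 0)
    (X1 : Mat p1 n) (X2 : Mat m q1) (X3 : Mat r3 s3) (X4 : Mat r4 s4) :
    (A1 * X1 + X2 * B1 + C3 * X3 * D3 + C4 * X4 * D4 = E1) ↔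
      (∃ (T1 : Mat r4 s4) (T2 : Mat r4 s4) (T3 : Mat r4 s4) (T4 : Mat r3 s3)
          (T5 : Mat r3 s3) (T6 : Mat p1 n) (T7 : Mat m q1) (T8 : Mat m q1),
        X3 = Ad * E * Bd - Ad * C * Md * E * Bd - Ad * S * Cd * E * Nd * D * Bd
              - Ad * S * T2 * Rp N Nd * D * Bd + Lp A Ad * T4 + T5 * Rp B Bd ∧
        X4 = Md * E * Dd + Sd * S * Cd * E * Nd + Lp M Md * Lp S Sd * T1
              + Lp M Md * T2 * Rp N Nd + T3 * Rp D Dd ∧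
        X1 = A1d * (E1 - C3 * X3 * D3 - C4 * X4 * D4) - A1d * T7 * B1
              + Lp A1 A1d * T6 ∧
        X2 = Rp A1 A1d * (E1 - C3 * X3 * D3 - C4 * X4 * D4) * B1d
              + A1 * A1d * T7 + T8 * Rp B1 B1d) := by
  have hMA := IsInnerInv.mul_projR_eq_self hAd.1 hAd.2.2.1 hMd.2.1 hMd.2.2.1 hM
  have hBN := IsInnerInv.projL_mul_eq_self hBd.1 hBd.2.2.2 hNd.2.1 hNd.2.2.2 hN
  have hMS := IsInnerInv.projL_mul_eq_self hMd.1 hMd.2.2.2 hSd.2.1 hSd.2.2.2 hS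
  exact (stmt_7_general hA1.1 hB1.1 hA hAd.1 hB hBd.1 hC hCd.1 hD hDd.1 hE hM hMd.1 hN hNd.1
    hS hSd.1 hMA hBN hMS).trans (and_iff_right ⟨hcond1, hcond2, hcond3, hcond4⟩)
end
end
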